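/- arXiv:2507.20611 — 2 statements merged into one kernel-verified Lean document; each statement's English description precedes it below -/
import Mathlib

section
/- Consider the job set P = {(1,0), (2,0), (3,0), (4,0), (1,1), (3,1), (0,2), (2,2), (4,2), (5,2)} of pairs (t, c) with temperature t ∈ ℕ and color c ∈ {0,1,2}. Every schedule S' of P (a list containing each job of P exactly once) whose nominal number of color changes satisfies C(S') ≤ 4 has total process temperature change T(S') ≥ 7. -/
/-!
The number of distinct jobs in a list `S` is at most `T(S) + C(S) + 1`, since consecutive distinct
jobs differ in temperature or in color. Flattening the temperatures `≤ 1` and the temperatures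
`≥ 4` leaves nine distinct jobs of `P`, so with `C(S) ≤ 4` the temperature change taking place
between `1` and `4` is at least `4`. The changes below `1` and above `4` contribute at least `1`
each, so `T(S) ≥ 6`, and equality would force both of them to equal `1`. Then, by parity, one
endpoint lies at `0` and the other above `4`, so the change between `1` and `4` has the parity of
`4 - 1`, hence is at least `5`.
-/

/-- A job is a pair `(t, c)` of a natural-number temperature `t` and a color `c ∈ {0,1,2}`. -/
abbrev Job := ℕ × ℕ

/-- Total process temperature change `T(S) = Σ_{i=1}^{N-1} |t(p_{i+1}) - t(p_i)|`. -/
def totalTempChange : List Job → ℕ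
  | p :: q :: rest => Nat.dist p.1 q.1 + totalTempChange (q :: rest)
  | _ => 0

/-- Nominal number of color changes `C(S) = |{i : c(p_i) ≠ c(p_{i+1})}|`. -/
def nominalColorChanges : List Job → ℕ
  | p :: q :: rest => (if p.2 ≠ q.2 then 1 else 0) + nominalColorChanges (q :: rest)
  | _ => 0

/-- The three-color job set from the paper's outlook section. -/
def P : List Job :=
  [(1,0), (2,0), (3,0), (4,0), (1,1), (3,1), (0,2), (2,2), (4,2), (5,2)]

/-- The job list `S` with every temperature `t` replaced by `g t` and all colors kept. It measures
the part of the temperature change that `g` does not flatten. -/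
def mapTemp (g : ℕ → ℕ) (S : List Job) : List Job :=
  S.map (Prod.map g id)

theorem nominalColorChanges_mapTemp (g : ℕ → ℕ) (S : List Job) :
    nominalColorChanges (mapTemp g S) = nominalColorChanges S := by
  match S with
  | [] | [_] => rfl
  | p :: q :: rest =>
    exact congrArg ((if p.2 ≠ q.2 then 1 else 0) + ·) (nominalColorChanges_mapTemp g (q :: rest))

theorem card_toFinset_le_totalTempChange_add_nominalColorChanges (S : List Job) :
    S.toFinset.card ≤ totalTempChange S + nominalColorChanges S + 1 := by
  match S with
  | [] | [_] => simp
  | p :: q :: rest =>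
    have ih := card_toFinset_le_totalTempChange_add_nominalColorChanges (q :: rest)
    rw [List.toFinset_cons]
    simp only [totalTempChange, nominalColorChanges]
    by_cases hpq : p = q
    · rw [Finset.insert_eq_of_mem (by simp [hpq])]
      omega
    · have hstep : 1 ≤ Nat.dist p.1 q.1 + if p.2 ≠ q.2 then 1 else 0 := by
        by_cases hcolor : p.2 = q.2
        · have htemp : p.1 ≠ q.1 := fun h => hpq (Prod.ext h hcolor)
          exact (Nat.dist_pos_of_ne htemp).trans_le (Nat.le_add_right _ _)
        · simp [hcolor]
      have hcard := Finset.card_insert_le p (q :: rest).toFinset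
      omega

theorem card_toFinset_mapTemp_le (g : ℕ → ℕ) {Q S : List Job} (hQ : Q ⊆ S) :
    (mapTemp g Q).toFinset.card ≤
      totalTempChange (mapTemp g S) + nominalColorChanges S + 1 := by
  have hsub : (mapTemp g Q).toFinset ⊆ (mapTemp g S).toFinset := fun _ hp =>
    List.mem_toFinset.mpr (List.map_subset _ hQ (List.mem_toFinset.mp hp))
  calc
    (mapTemp g Q).toFinset.card ≤ (mapTemp g S).toFinset.card := Finset.card_le_card hsub
    _ ≤ totalTempChange (mapTemp g S) + nominalColorChanges (mapTemp g S) + 1 :=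
      card_toFinset_le_totalTempChange_add_nominalColorChanges _
    _ = totalTempChange (mapTemp g S) + nominalColorChanges S + 1 := by
      rw [nominalColorChanges_mapTemp]

theorem totalTempChange_le_cons (p : Job) (S : List Job) :
    totalTempChange S ≤ totalTempChange (p :: S) := by
  cases S with
  | nil => exact Nat.zero_le _
  | cons q S => exact Nat.le_add_left _ _

theorem dist_head_le_totalTempChange {S : List Job} {p q : Job} (hq : q ∈ S) :
    Nat.dist p.1 q.1 ≤ totalTempChange (p :: S) := by
  induction S generalizing p with
  | nil => simp at hq
  | cons r S ih =>
    rcases List.mem_cons.mp hq with rfl | hq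
    · exact Nat.le_add_right _ _
    · calc
        Nat.dist p.1 q.1 ≤ Nat.dist p.1 r.1 + Nat.dist r.1 q.1 := Nat.dist.triangle_inequality ..
        _ ≤ Nat.dist p.1 r.1 + totalTempChange (r :: S) := Nat.add_le_add_left (ih hq) _

theorem dist_le_totalTempChange {S : List Job} {p q : Job} (hp : p ∈ S) (hq : q ∈ S) :
    Nat.dist p.1 q.1 ≤ totalTempChange S := by
  induction S with
  | nil => simp at hp
  | cons r S ih =>
    rcases List.mem_cons.mp hp with rfl | hpS <;> rcases List.mem_cons.mp hq with rfl | hqS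
    · simp
    · exact dist_head_le_totalTempChange hqS
    · exact Nat.dist_comm q.1 p.1 ▸ dist_head_le_totalTempChange hpS
    · exact (ih hpS hqS).trans (totalTempChange_le_cons r S)

theorem dist_le_totalTempChange_mapTemp (g : ℕ → ℕ) {S : List Job} {p q : Job} (hp : p ∈ S)
    (hq : q ∈ S) :
    Nat.dist (g p.1) (g q.1) ≤ totalTempChange (mapTemp g S) :=
  dist_le_totalTempChange (S := mapTemp g S) (List.mem_map_of_mem (f := Prod.map g id) hp)
    (List.mem_map_of_mem (f := Prod.map g id) hq)

theorem totalTempChange_modEq_head_add_getLast (S : List Job) (hS : S ≠ []) :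
    totalTempChange S ≡ (S.head hS).1 + (S.getLast hS).1 [MOD 2] := by
  match S with
  | [p] =>
    simp only [totalTempChange, Nat.ModEq, List.head_cons, List.getLast_singleton]
    omega
  | p :: q :: rest =>
    have ih := totalTempChange_modEq_head_add_getLast (q :: rest) (List.cons_ne_nil _ _)
    simp only [Nat.ModEq, totalTempChange, Nat.dist, List.head_cons,
      List.getLast_cons_cons] at ih ⊢
    omega

theorem totalTempChange_mapTemp_modEq (g : ℕ → ℕ) {S : List Job} (hS : S ≠ []) :
    totalTempChange (mapTemp g S) ≡ g (S.head hS).1 + g (S.getLast hS).1 [MOD 2] := by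
  simpa [mapTemp] using
    totalTempChange_modEq_head_add_getLast (mapTemp g S) (by simpa [mapTemp] using hS)

-- The subtractions are truncated on purpose: the three maps are nondecreasing and sum to the
-- identity, so they split every single temperature change as well.
theorem totalTempChange_eq_below_add_between_add_above (S : List Job) {a b : ℕ}
    (hab : a ≤ b) :
    totalTempChange S = totalTempChange (mapTemp (min · a) S) +
      totalTempChange (mapTemp (min · b - a) S) + totalTempChange (mapTemp (· - b) S) := by
  match S with
  | [] | [_] => rfl
  | p :: q :: rest =>
    have ih := totalTempChange_eq_below_add_between_add_above (q :: rest) hab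
    simp only [mapTemp, List.map_cons, totalTempChange, Prod.map_fst, Nat.dist] at ih ⊢
    omega

theorem totalTempChange_between_modEq {S : List Job} {b : ℕ}
    (hbelow : Odd (totalTempChange (mapTemp (min · 1) S)))
    (habove : Odd (totalTempChange (mapTemp (· - b) S))) :
    totalTempChange (mapTemp (min · b - 1) S) ≡ b - 1 [MOD 2] := by
  have hS : S ≠ [] := by
    rintro rfl
    simp [mapTemp, totalTempChange] at hbelow
  have hbelow' := totalTempChange_mapTemp_modEq (min · 1) hS
  have habove' := totalTempChange_mapTemp_modEq (· - b) hS
  have hbetween := totalTempChange_mapTemp_modEq (min · b - 1) hS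
  -- One endpoint has temperature `0` and the other a temperature above `b`.
  rw [Nat.odd_iff] at hbelow habove
  simp only [Nat.ModEq] at hbelow' habove' hbetween ⊢
  omega

theorem four_le_totalTempChange_between {S : List Job} (hP : P ⊆ S)
    (hC : nominalColorChanges S ≤ 4) : 4 ≤ totalTempChange (mapTemp (min · 4 - 1) S) := by
  have hnine : (mapTemp (min · 4 - 1) P).toFinset.card = 9 := by decide
  have hcard := card_toFinset_mapTemp_le (min · 4 - 1) hP
  omega

theorem outlook_lower_bound_general (S : List Job) (hP : P ⊆ S)
    (hC : nominalColorChanges S ≤ 4) :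
    7 ≤ totalTempChange S := by
  have hsplit := totalTempChange_eq_below_add_between_add_above S (show 1 ≤ 4 by decide)
  have hbetween := four_le_totalTempChange_between hP hC
  have hbelow : 1 ≤ totalTempChange (mapTemp (min · 1) S) :=
    dist_le_totalTempChange_mapTemp (min · 1) (p := (0, 2)) (q := (1, 0))
      (hP (by decide)) (hP (by decide))
  have habove : 1 ≤ totalTempChange (mapTemp (· - 4) S) :=
    dist_le_totalTempChange_mapTemp (· - 4) (p := (4, 2)) (q := (5, 2))
      (hP (by decide)) (hP (by decide))
  by_contra! hlt
  have hparity := totalTempChange_between_modEq (S := S) (b := 4)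
    (Nat.odd_iff.mpr (by omega)) (Nat.odd_iff.mpr (by omega))
  rw [Nat.ModEq] at hparity
  omega

/-- Every schedule of `P` with at most `4` nominal color changes has total process
temperature change at least `7`. -/
theorem outlook_lower_bound (S' : List Job) (hperm : S'.Perm P)
    (hC : nominalColorChanges S' ≤ 4) :
    7 ≤ totalTempChange S' :=
  outlook_lower_bound_general S' hperm.symm.subset hC
end

section
/- Consider the job set P = {(1,0), (2,0), (3,0), (4,0), (1,1), (3,1), (0,2), (2,2), (4,2), (5,2)} of pairs (t, c) with temperature t ∈ ℕ and color c ∈ {0,1,2}, and the schedule S = ((0,2), (2,2), (2,0), (1,0), (1,1), (3,1), (3,0), (4,0), (4,2), (5,2)). Every schedule S' of P with nominal number of color changes C(S') ≤ 4 and total process temperature change T(S') = 7 equals either S or the reversal of S. In particular, S is the unique optimal schedule up to reversal for this instance with color-change bound 4. -/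
/-- The optimal schedule from the paper's outlook section. -/
def S : List Job :=
  [(0,2), (2,2), (2,0), (1,0), (1,1), (3,1), (3,0), (4,0), (4,2), (5,2)]

/-!
Since temperature distance and color inequality both satisfy the triangle inequality, deleting a
job from a schedule increases neither `T` nor `C`. So the schedules within both bounds can be
enumerated by inserting the jobs one at a time and discarding every partial schedule that already
exceeds a bound; for `P` at most 24 partial schedules survive each round.
-/

section StepSum

variable {α M : Type*} [AddCommMonoid M]

/-- The length of the path through the entries of a list, where a step from `a` to `b` has length
`d a b`. Both the temperature change and the number of color changes are of this form. -/
def stepSum (d : α → α → M) : List α → M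
  | a :: b :: L => d a b + stepSum d (b :: L)
  | _ => 0

variable [PartialOrder M] [CanonicallyOrderedAdd M] {d : α → α → M}

lemma stepSum_le_stepSum_cons (a : α) : ∀ L : List α, stepSum d L ≤ stepSum d (a :: L)
  | [] => le_rfl
  | _ :: _ => le_add_self

variable [IsOrderedAddMonoid M]

lemma stepSum_cons_le_stepSum_cons_cons (hd : ∀ a b c, d a c ≤ d a b + d b c) (a b : α) :
    ∀ L : List α, stepSum d (a :: L) ≤ stepSum d (a :: b :: L)
  | [] => zero_le
  | c :: L => calc
      d a c + stepSum d (c :: L) ≤ d a b + d b c + stepSum d (c :: L) := by gcongr; exact hd a b c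
      _ = d a b + (d b c + stepSum d (c :: L)) := add_assoc ..

lemma stepSum_cons_le_of_sublist (hd : ∀ a b c, d a c ≤ d a b + d b c) {K L : List α}
    (h : K.Sublist L) (a : α) : stepSum d (a :: K) ≤ stepSum d (a :: L) := by
  induction h generalizing a with
  | slnil => exact le_rfl
  | @cons K L b _ ih =>
    calc
      stepSum d (a :: K) ≤ stepSum d (a :: b :: K) := stepSum_cons_le_stepSum_cons_cons hd a b K
      _ ≤ stepSum d (a :: b :: L) := add_le_add_right (ih b) _
  | cons_cons b _ ih => exact add_le_add_right (ih b) _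

lemma stepSum_le_of_sublist (hd : ∀ a b c, d a c ≤ d a b + d b c) {K L : List α}
    (h : K.Sublist L) : stepSum d K ≤ stepSum d L := by
  induction h with
  | slnil => exact le_rfl
  | cons a _ ih => exact ih.trans (stepSum_le_stepSum_cons a _)
  | cons_cons a h _ => exact stepSum_cons_le_of_sublist hd h a

end StepSum

lemma totalTempChange_eq_stepSum (L : List Job) :
    totalTempChange L = stepSum (fun p q => Nat.dist p.1 q.1) L := by
  fun_induction totalTempChange L <;> simp_all [stepSum]

lemma nominalColorChanges_eq_stepSum (L : List Job) :
    nominalColorChanges L = stepSum (fun p q => if p.2 ≠ q.2 then 1 else 0) L := by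
  fun_induction nominalColorChanges L <;> simp_all [stepSum]

lemma totalTempChange_le_of_sublist {K L : List Job} (h : K.Sublist L) :
    totalTempChange K ≤ totalTempChange L := by
  simp only [totalTempChange_eq_stepSum]
  exact stepSum_le_of_sublist (fun p q r => Nat.dist.triangle_inequality p.1 q.1 r.1) h

lemma nominalColorChanges_le_of_sublist {K L : List Job} (h : K.Sublist L) :
    nominalColorChanges K ≤ nominalColorChanges L := by
  simp only [nominalColorChanges_eq_stepSum]
  exact stepSum_le_of_sublist (fun _ _ _ => by grind) h

section PrunedPermutations

variable {α : Type*}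

lemma sublist_of_mem_permutations'Aux {a : α} {K L : List α} (h : L ∈ K.permutations'Aux a) :
    K.Sublist L := by
  obtain ⟨n, hn, rfl⟩ := List.mem_iff_getElem.1 h
  rw [List.getElem_permutations'Aux]
  exact List.sublist_insertIdx K n a

/-- The permutations of a list that satisfy `q`, built by inserting the entries one at a time and
keeping only the lists satisfying `q` after each insertion. This loses nothing if `q` is inherited
by sublists. -/
def prunedPermutations (q : List α → Prop) [DecidablePred q] : List α → List (List α)
  | [] => [[]].filter q
  | a :: L => ((prunedPermutations q L).flatMap (List.permutations'Aux a)).filter q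

lemma mem_prunedPermutations {q : List α → Prop} [DecidablePred q]
    (hq : ∀ K L, K.Sublist L → q L → q K) {K L : List α} :
    K ∈ prunedPermutations q L ↔ K.Perm L ∧ q K := by
  rw [← List.mem_permutations']
  induction L generalizing K with
  | nil => simp [prunedPermutations]
  | cons a L ih =>
    simp only [prunedPermutations, List.permutations', List.mem_filter, List.mem_flatMap, ih,
      decide_eq_true_eq]
    refine and_congr_left fun hK => exists_congr fun K' => ?_
    have inherited (hins : K ∈ K'.permutations'Aux a) : q K' :=
      hq K' K (sublist_of_mem_permutations'Aux hins) hK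
    tauto

end PrunedPermutations

lemma prunedPermutations_P :
    prunedPermutations (fun L => nominalColorChanges L ≤ 4 ∧ totalTempChange L ≤ 7) P =
      [S, S.reverse] := by
  decide +kernel

theorem outlook_unique_up_to_reversal_general (S' : List Job) (hperm : S'.Perm P)
    (hC : nominalColorChanges S' ≤ 4) (hT : totalTempChange S' ≤ 7) :
    S' = S ∨ S' = S.reverse := by
  have bounds_inherited (K L : List Job) (h : K.Sublist L) :
      nominalColorChanges L ≤ 4 ∧ totalTempChange L ≤ 7 →
        nominalColorChanges K ≤ 4 ∧ totalTempChange K ≤ 7 :=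
    And.imp (nominalColorChanges_le_of_sublist h).trans (totalTempChange_le_of_sublist h).trans
  have mem_enumeration := (mem_prunedPermutations bounds_inherited).2 ⟨hperm, hC, hT⟩
  simpa only [prunedPermutations_P, List.mem_pair] using mem_enumeration

/-- `S` is the unique optimal schedule up to reversal: every schedule of `P` with at
most `4` nominal color changes and total temperature change `7` equals `S` or its
reversal. -/
theorem outlook_unique_up_to_reversal (S' : List Job) (hperm : S'.Perm P)
    (hC : nominalColorChanges S' ≤ 4) (hT : totalTempChange S' = 7) :
    S' = S ∨ S' = S.reverse :=
  outlook_unique_up_to_reversal_general S' hperm hC hT.le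
end
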